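/- (Calibration of quantum conformal prediction, QCP, for regression) Let X be a measurable space. Let κ be a Markov kernel from X to ℝ^M (modeling the joint distribution of M measurement shots of a pre-trained quantum model, allowing arbitrary correlation and drift across the M shots). Let (x_1, y_1), …, (x_N, y_N), (x_{N+1}, y_{N+1}) be i.i.d. random pairs in X × ℝ, and, conditionally independently given the pairs, for each i = 1, …, N+1 draw the M-tuple of predictions (ŷ_i^1, …, ŷ_i^M) ∼ κ(x_i, ·). Fix an integer k with 1 ≤ k ≤ M and define the score s(y, (ŷ^1, …, ŷ^M)) as the k-th smallest value among the distances |y − ŷ^1|, …, |y − ŷ^M|. For α ∈ (0,1) with α ≥ 1/(N+1), let Q_{1−α} be the ⌈(1−α)(N+1)⌉-th smallest value among the calibration scores s(y_i, (ŷ_i^1, …, ŷ_i^M)), i = 1, …, N. Define Γ_M(x_{N+1}) = { y' ∈ ℝ : s(y', (ŷ_{N+1}^1, …, ŷ_{N+1}^M)) ≤ Q_{1−α} }. Then Pr( y_{N+1} ∈ Γ_M(x_{N+1}) ) ≥ 1 − α, where the probability is over the calibration data, the test point, and all random predictions. -/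

import Mathlib

open MeasureTheory ProbabilityTheory

/-- The `k`-th smallest value (counting multiplicities) of a list of reals:
the `k`-th entry of the list sorted in nondecreasing order. -/
noncomputable def kthSmallest (l : List ℝ) (k : ℕ) : ℝ :=
  (l.mergeSort (fun a b => @decide (a ≤ b) (Classical.propDecidable _))).getD (k - 1) 0

/-!
Attaching to each point of an exchangeable sequence an independent draw from one fixed kernel keeps
the sequence exchangeable. If `q` is the `n`-th smallest of all `N + 1` scores, then at least `n`
scores are `≤ q`, so by exchangeability the test score is `≤ q` with probability at least
`n / (N + 1)`, which is at least `1 - α` for `n = ⌈(1 - α) (N + 1)⌉`. Finally, leaving the test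
score out of the sample does not matter: it is `≤ q` iff fewer than `n` scores lie strictly below
it, and it is never strictly below itself.
-/

section OrderStatistics

variable {n k : ℕ}

theorem kthSmallest_congr_perm {l₁ l₂ : List ℝ} (h : l₁.Perm l₂) (k : ℕ) :
    kthSmallest l₁ k = kthSmallest l₂ k := by
  have pairwise_mergeSort (l : List ℝ) :
      (l.mergeSort fun a b => @decide (a ≤ b) (Classical.propDecidable _)).Pairwise (· ≤ ·) := by
    simpa only [decide_eq_true_eq] using
      List.pairwise_mergeSort (le := fun a b : ℝ => @decide (a ≤ b) (Classical.propDecidable _))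
        (by simpa only [decide_eq_true_eq] using fun _ _ _ => le_trans)
        (by simpa only [Bool.or_eq_true, decide_eq_true_eq] using le_total) l
  unfold kthSmallest
  rw [((List.mergeSort_perm l₁ _).trans <| h.trans (List.mergeSort_perm l₂ _).symm).eq_of_pairwise'
    (pairwise_mergeSort l₁) (pairwise_mergeSort l₂)]

theorem kthSmallest_ofFn_comp_perm (f : Fin n → ℝ) (σ : Equiv.Perm (Fin n)) (k : ℕ) :
    kthSmallest (List.ofFn (f ∘ σ)) k = kthSmallest (List.ofFn f) k :=
  kthSmallest_congr_perm (σ.ofFn_comp_perm f) k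

theorem kthSmallest_ofFn_of_monotone {f : Fin n → ℝ} (hf : Monotone f) (j : Fin n) :
    kthSmallest (List.ofFn f) (j + 1) = f j := by
  have sorted : (List.ofFn f).Pairwise
      fun a b => @decide (a ≤ b) (Classical.propDecidable _) = true := by
    simpa only [decide_eq_true_eq] using hf.sortedLE_ofFn.pairwise
  unfold kthSmallest
  rw [List.mergeSort_of_pairwise sorted]
  simp

theorem kthSmallest_ofFn_eq_sort (f : Fin n → ℝ) (j : Fin n) :
    kthSmallest (List.ofFn f) (j + 1) = f (Tuple.sort f j) := by
  rw [← kthSmallest_ofFn_comp_perm f (Tuple.sort f)]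
  exact kthSmallest_ofFn_of_monotone (Tuple.monotone_sort f) j

theorem kthSmallest_ofFn_mem_iff (f : Fin n → ℝ) (hk₁ : 1 ≤ k) (hkn : k ≤ n) {S : Set ℝ}
    [DecidablePred (· ∈ S)] (hS : IsLowerSet S) :
    kthSmallest (List.ofFn f) k ∈ S ↔ k ≤ Finset.card {i | f i ∈ S} := by
  obtain ⟨j, rfl⟩ := Nat.exists_eq_add_of_le' hk₁
  have reindex : Finset.card {i | f (Tuple.sort f i) ∈ S} = Finset.card {i | f i ∈ S} :=
    Finset.card_equiv (Tuple.sort f) (by simp)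
  rw [kthSmallest_ofFn_eq_sort f ⟨j, hkn⟩, ← reindex]
  exact (Fin.lt_card_filter_univ_iff_apply_of_imp (j := ⟨j, hkn⟩)
    (fun i => f (Tuple.sort f i) ∈ S)
    fun _ _ hij => hS (Tuple.monotone_sort f hij)).symm

theorem kthSmallest_ofFn_le_iff (f : Fin n → ℝ) (hk₁ : 1 ≤ k) (hkn : k ≤ n) (c : ℝ) :
    kthSmallest (List.ofFn f) k ≤ c ↔ k ≤ Finset.card {i | f i ≤ c} :=
  kthSmallest_ofFn_mem_iff f hk₁ hkn (isLowerSet_Iic c)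

theorem kthSmallest_ofFn_lt_iff (f : Fin n → ℝ) (hk₁ : 1 ≤ k) (hkn : k ≤ n) (c : ℝ) :
    kthSmallest (List.ofFn f) k < c ↔ k ≤ Finset.card {i | f i < c} :=
  kthSmallest_ofFn_mem_iff f hk₁ hkn (isLowerSet_Iio c)

theorem last_le_kthSmallest_ofFn_castSucc_iff (f : Fin (n + 1) → ℝ) (hk₁ : 1 ≤ k) (hkn : k ≤ n) :
    f (Fin.last n) ≤ kthSmallest (List.ofFn fun i : Fin n => f i.castSucc) k ↔
      f (Fin.last n) ≤ kthSmallest (List.ofFn f) k := by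
  have card_eq : Finset.card {i : Fin n | f i.castSucc < f (Fin.last n)} =
      Finset.card {i | f i < f (Fin.last n)} := by
    rw [Finset.card_filter, Finset.card_filter, Fin.sum_univ_castSucc, if_neg (lt_irrefl _),
      add_zero]
  rw [← not_lt, ← not_lt, kthSmallest_ofFn_lt_iff _ hk₁ hkn,
    kthSmallest_ofFn_lt_iff f hk₁ (hkn.trans n.le_succ), card_eq]

theorem measurable_kthSmallest_ofFn {Ω : Type*} [MeasurableSpace Ω] {f : Fin n → Ω → ℝ}
    (hf : ∀ i, Measurable (f i)) (hk₁ : 1 ≤ k) (hkn : k ≤ n) :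
    Measurable fun ω => kthSmallest (List.ofFn fun i => f i ω) k := by
  refine measurable_of_Iic fun c => ?_
  have measurable_card : Measurable fun ω => Finset.card {i | f i ω ≤ c} := by
    simp only [Finset.card_filter]
    exact Finset.measurable_sum _ fun i _ =>
      Measurable.ite (measurableSet_le (hf i) measurable_const) measurable_const measurable_const
  simpa only [Set.preimage, Set.mem_Iic, Set.mem_Ici, kthSmallest_ofFn_le_iff _ hk₁ hkn] using
    measurable_card (measurableSet_Ici (a := k))

end OrderStatistics

theorem natCast_mul_measure_univ_le_sum {Ω ι : Type*} [MeasurableSpace Ω] [Fintype ι]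
    (μ : Measure Ω) {A : ι → Set Ω} [∀ ω, DecidablePred fun i => ω ∈ A i]
    (hA : ∀ i, MeasurableSet (A i)) {k : ℕ} (hk : ∀ ω, k ≤ Finset.card {i | ω ∈ A i}) :
    k * μ Set.univ ≤ ∑ i, μ (A i) := by
  calc k * μ Set.univ = ∫⁻ _, k ∂μ := (lintegral_const _).symm
    _ ≤ ∫⁻ ω, ∑ i, (A i).indicator 1 ω ∂μ := lintegral_mono fun ω => by
      simpa [Set.indicator_apply] using hk ω
    _ = ∑ i, ∫⁻ ω, (A i).indicator 1 ω ∂μ :=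
      lintegral_finsetSum _ fun i _ => measurable_one.indicator (hA i)
    _ = ∑ i, μ (A i) := by simp only [lintegral_indicator_one (hA _)]

section PiKernel

variable {ι : Type*} {E F : ι → Type*} [Fintype ι] [∀ i, MeasurableSpace (E i)]
  [∀ i, MeasurableSpace (F i)] (κ : ∀ i, Kernel (E i) (F i)) [∀ i, IsMarkovKernel (κ i)]

/-- The parallel product of finitely many Markov kernels: from `x`, it draws the coordinates
independently, the `i`-th one with law `κ i (x i)`. -/
noncomputable def piKernel : Kernel (∀ i, E i) (∀ i, F i) where
  toFun x := Measure.pi fun i => κ i (x i)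
  measurable' := by
    refine Measurable.measure_of_isPiSystem_of_isProbabilityMeasure generateFrom_pi.symm
      isPiSystem_pi ?_
    rintro _ ⟨t, ht, rfl⟩
    simp only [Measure.pi_pi]
    exact Finset.measurable_prod _ fun i _ =>
      ((κ i).measurable_coe (ht i (Set.mem_univ i))).comp (measurable_pi_apply i)

instance isMarkovKernel_piKernel : IsMarkovKernel (piKernel κ) :=
  ⟨fun x => inferInstanceAs (IsProbabilityMeasure (Measure.pi fun i => κ i (x i)))⟩

end PiKernel

theorem map_prodMk_pi_eq_piKernel {ι Z W : Type*} [Fintype ι] [MeasurableSpace Z]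
    [MeasurableSpace W] (κ : Kernel Z W) [IsMarkovKernel κ] (z : ι → Z) :
    (Measure.pi fun i => κ (z i)).map (fun y i => (z i, y i)) =
      piKernel (fun _ : ι => Kernel.id ×ₖ κ) z := by
  have (i : ι) : IsProbabilityMeasure ((κ (z i)).map (Prod.mk (z i))) :=
    Measure.isProbabilityMeasure_map measurable_prodMk_left.aemeasurable
  rw [Measure.pi_map_pi fun i => measurable_prodMk_left.aemeasurable]
  simp only [piKernel, Kernel.coe_mk, Kernel.prod_apply, Kernel.id_apply, Measure.dirac_prod]

theorem pi_map_comp_perm {ι E : Type*} [Fintype ι] [MeasurableSpace E] (μ : ι → Measure E)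
    [∀ i, SigmaFinite (μ i)] (σ : Equiv.Perm ι) :
    (Measure.pi μ).map (fun x => x ∘ σ) = Measure.pi fun i => μ (σ i) := by
  have h := Measure.pi_map_piCongrLeft σ.symm (β := fun _ => E) (fun i => μ (σ i))
  simp only [Equiv.apply_symm_apply] at h
  convert h using 2
  ext x i
  simpa [MeasurableEquiv.coe_piCongrLeft] using
    (Equiv.piCongrLeft_apply_apply (fun _ => E) σ.symm x (σ i)).symm

/-- Exchangeability of a family indexed by `ι`, as a property of its joint law `P`: permuting the
indices does not change the law. -/
def Exchangeable {ι E : Type*} [MeasurableSpace E] (P : Measure (ι → E)) : Prop :=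
  ∀ σ : Equiv.Perm ι, P.map (fun x => x ∘ σ) = P

theorem exchangeable_pi {ι E : Type*} [Fintype ι] [MeasurableSpace E] (μ : Measure E)
    [SigmaFinite μ] : Exchangeable (Measure.pi fun _ : ι => μ) :=
  pi_map_comp_perm fun _ => μ

namespace Exchangeable

theorem map {ι E F : Type*} [MeasurableSpace E] [MeasurableSpace F] {P : Measure (ι → E)}
    (hP : Exchangeable P) {f : E → F} (hf : Measurable f) :
    Exchangeable (P.map fun x => f ∘ x) := by
  intro σ
  nth_rw 2 [← hP σ]
  rw [Measure.map_map (by fun_prop) (by fun_prop), Measure.map_map (by fun_prop) (by fun_prop)]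
  rfl

theorem bind_piKernel {ι E F : Type*} [Fintype ι] [MeasurableSpace E] [MeasurableSpace F]
    {P : Measure (ι → E)} (hP : Exchangeable P) (κ : Kernel E F) [IsMarkovKernel κ] :
    Exchangeable (P.bind (piKernel fun _ : ι => κ)) := by
  intro σ
  set K := piKernel fun _ : ι => κ
  calc (P.bind K).map (fun y => y ∘ σ)
      = P.bind (K.map fun y => y ∘ σ) := Measure.map_comp P K (by fun_prop)
    _ = P.bind fun x => K (x ∘ σ) := by
        congr 1 with x : 1
        rw [Kernel.map_apply _ (by fun_prop)]
        exact pi_map_comp_perm (fun i => κ (x i)) σ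
    _ = (P.map fun x => x ∘ σ).bind K := by
        rw [Measure.bind, Measure.bind, Measure.map_map K.measurable (by fun_prop)]
        rfl
    _ = P.bind K := by rw [hP σ]

variable {n k : ℕ}

theorem measure_le_kthSmallest_eq {P : Measure (Fin n → ℝ)} (hP : Exchangeable P)
    (hk₁ : 1 ≤ k) (hkn : k ≤ n) (i j : Fin n) :
    P {x | x i ≤ kthSmallest (List.ofFn x) k} = P {x | x j ≤ kthSmallest (List.ofFn x) k} := by
  conv_lhs => rw [← hP (Equiv.swap i j)]
  rw [Measure.map_apply (by fun_prop) (measurableSet_le (measurable_pi_apply i)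
    (measurable_kthSmallest_ofFn measurable_pi_apply hk₁ hkn))]
  congr 1 with x
  change (x ∘ Equiv.swap i j) i ≤ kthSmallest (List.ofFn (x ∘ Equiv.swap i j)) k ↔
    x j ≤ kthSmallest (List.ofFn x) k
  rw [kthSmallest_ofFn_comp_perm, Function.comp_apply, Equiv.swap_apply_left]

theorem div_le_measure_le_kthSmallest {P : Measure (Fin n → ℝ)} [IsProbabilityMeasure P]
    (hP : Exchangeable P) (hk₁ : 1 ≤ k) (hkn : k ≤ n) (i : Fin n) :
    (k / n : ENNReal) ≤ P {x | x i ≤ kthSmallest (List.ofFn x) k} := by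
  refine ENNReal.div_le_of_le_mul' ?_
  calc (k : ENNReal) = k * P Set.univ := by rw [measure_univ, mul_one]
    _ ≤ ∑ j, P {x | x j ≤ kthSmallest (List.ofFn x) k} :=
      natCast_mul_measure_univ_le_sum P
        (fun j => measurableSet_le (measurable_pi_apply j)
          (measurable_kthSmallest_ofFn measurable_pi_apply hk₁ hkn))
        fun x => (kthSmallest_ofFn_le_iff x hk₁ hkn _).1 le_rfl
    _ = n * P {x | x i ≤ kthSmallest (List.ofFn x) k} := by
      simp [hP.measure_le_kthSmallest_eq hk₁ hkn _ i]

theorem div_le_measure_last_le_kthSmallest {E : Type*} [MeasurableSpace E]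
    {P : Measure (Fin (n + 1) → E)} [IsProbabilityMeasure P] (hP : Exchangeable P)
    {s : E → ℝ} (hs : Measurable s) (hk₁ : 1 ≤ k) (hkn : k ≤ n) :
    (k / (n + 1 : ℕ) : ENNReal) ≤ P {x | s (x (Fin.last n)) ≤
      kthSmallest (List.ofFn fun i : Fin n => s (x i.castSucc)) k} := by
  have hsx : Measurable fun x : Fin (n + 1) → E => s ∘ x := by fun_prop
  have := Measure.isProbabilityMeasure_map (μ := P) hsx.aemeasurable
  have hkn' : k ≤ n + 1 := hkn.trans n.le_succ
  calc (k / (n + 1 : ℕ) : ENNReal)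
      ≤ P.map (fun x => s ∘ x) {r | r (Fin.last n) ≤ kthSmallest (List.ofFn r) k} :=
        (hP.map hs).div_le_measure_le_kthSmallest hk₁ hkn' (Fin.last n)
    _ = P {x | s (x (Fin.last n)) ≤
          kthSmallest (List.ofFn fun i : Fin n => s (x i.castSucc)) k} := by
        rw [Measure.map_apply hsx (measurableSet_le (measurable_pi_apply _)
          (measurable_kthSmallest_ofFn measurable_pi_apply hk₁ hkn'))]
        congr 1 with x
        exact (last_le_kthSmallest_ofFn_castSucc_iff (s ∘ x) hk₁ hkn).symm

end Exchangeable

theorem ofReal_le_natCeil_mul_div (c : ℝ) {m : ℕ} (hm : m ≠ 0) :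
    ENNReal.ofReal c ≤ (⌈c * m⌉₊ / m : ENNReal) := by
  rw [ENNReal.le_div_iff_mul_le (by simp [hm]) (by simp), ← ENNReal.ofReal_natCast m,
    ← ENNReal.ofReal_mul' m.cast_nonneg, ← ENNReal.ofReal_natCast ⌈c * m⌉₊]
  exact ENNReal.ofReal_le_ofReal (Nat.le_ceil _)

theorem qcp_regression_calibration_general
    {Z W : Type*} [MeasurableSpace Z] [MeasurableSpace W] {N : ℕ}
    {P : Measure (Fin (N + 1) → Z)} [IsProbabilityMeasure P] (hP : Exchangeable P)
    (κ : Kernel Z W) [IsMarkovKernel κ] {s : Z × W → ℝ} (hs : Measurable s)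
    {α : ℝ} (hα1 : α < 1) (hαN : 1 / ((N : ℝ) + 1) ≤ α) :
    ENNReal.ofReal (1 - α) ≤
      (P.bind fun z => (Measure.pi fun i => κ (z i)).map fun y i => (z i, y i))
        {w | s (w (Fin.last N)) ≤ kthSmallest (List.ofFn fun i : Fin N => s (w i.castSucc))
          ⌈(1 - α) * ((N : ℝ) + 1)⌉₊} := by
  have hN : (0 : ℝ) < N + 1 := by positivity
  have one_le_ceil : 1 ≤ ⌈(1 - α) * ((N : ℝ) + 1)⌉₊ := Nat.ceil_pos.2 (mul_pos (by linarith) hN)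
  have ceil_le : ⌈(1 - α) * ((N : ℝ) + 1)⌉₊ ≤ N := by
    rw [Nat.ceil_le]
    linarith [(div_le_iff₀ hN).1 hαN]
  have level_le : ENNReal.ofReal (1 - α) ≤ ⌈(1 - α) * ((N : ℝ) + 1)⌉₊ / (N + 1 : ℕ) := by
    simpa only [Nat.cast_succ] using ofReal_le_natCeil_mul_div (1 - α) N.succ_ne_zero
  simp only [map_prodMk_pi_eq_piKernel]
  exact level_le.trans <|
    (hP.bind_piKernel (Kernel.id ×ₖ κ)).div_le_measure_last_le_kthSmallest hs one_le_ceil ceil_le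

/-- Calibration of quantum conformal prediction (QCP) for regression: the pairs
`(x i, y i) ∈ X × ℝ`, `i = 1, …, N+1`, are i.i.d. with law `ν`; conditionally
independently given the pairs, each point `i` receives an `M`-tuple of predictions
drawn (jointly, allowing arbitrary correlation and drift across the `M` shots) from
the Markov kernel `κ` evaluated at its input. With the `k`-NN score
`s(y, ŷ) = (k-th smallest of |y - ŷ m|, m = 1, …, M)` and `Q` the
`⌈(1-α)(N+1)⌉`-th smallest calibration score, the QCP set
`Γ_M(x) = {y' | s(y', ŷ) ≤ Q}` covers the test label with probability
at least `1 - α`. -/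
theorem qcp_regression_calibration
    {X : Type*} [MeasurableSpace X]
    (N M : ℕ) (κ : Kernel X (Fin M → ℝ)) [IsMarkovKernel κ]
    (k : ℕ) (hk1 : 1 ≤ k) (hk2 : k ≤ M)
    (ν : Measure (X × ℝ)) [IsProbabilityMeasure ν]
    (α : ℝ) (hα0 : 0 < α) (hα1 : α < 1) (hαN : 1 / ((N : ℝ) + 1) ≤ α) :
    ENNReal.ofReal (1 - α) ≤
      ((Measure.pi fun _ : Fin (N + 1) => ν).bind fun zs =>
        Measure.map
          (fun (yh : Fin (N + 1) → Fin M → ℝ) (i : Fin (N + 1)) => (zs i, yh i))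
          (Measure.pi fun i => κ (zs i).1))
      {w : Fin (N + 1) → (X × ℝ) × (Fin M → ℝ) |
        (w (Fin.last N)).1.2 ∈
          {y' : ℝ |
            kthSmallest (List.ofFn fun m : Fin M => |y' - (w (Fin.last N)).2 m|) k ≤
              kthSmallest
                (List.ofFn fun i : Fin N =>
                  kthSmallest
                    (List.ofFn fun m : Fin M => |(w i.castSucc).1.2 - (w i.castSucc).2 m|) k)
                ⌈(1 - α) * ((N : ℝ) + 1)⌉₊}} := by
  have measurable_score : Measurable fun z : (X × ℝ) × (Fin M → ℝ) =>
      kthSmallest (List.ofFn fun m => |z.1.2 - z.2 m|) k :=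
    measurable_kthSmallest_ofFn (fun m => by fun_prop) hk1 hk2
  exact qcp_regression_calibration_general (exchangeable_pi ν)
    (κ.comap Prod.fst measurable_fst) measurable_score hα1 hαN
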